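/- Let r ≥ 1 be an integer and α > −1, and set ν_j := α + (j−1)/r for j = 1,…,r, θ := 1/r, and c := (r−1)/(12(r+1)) − (1/(2(r+1)))·∑_{j=1}^{r} ν_j². Define d(1/r, α) := r·ζ′(−1) + ((1+(1+2α)r)/4)·ln(2π) − (1/12)·(3 + 1/r + r + 6α(1+r+αr))·ln r − ∑_{k=1}^{r} logG(1+α+k/r), d(1, α) := ζ′(−1) + ((1+α)/2)·ln(2π) − logG(2+α), and C^{MB} := G(1+α)·(2π)^{−α/2}·exp(d(1,α) − d(1/r,α))·exp( ((24α(α+2)+15+3θ+4θ²)/(24(1+θ)))·ln θ )·exp( ((6αθ − 6α(1+α) − (θ−1)²)/(12θ))·ln(1+θ) ). Then the explicit constant C defined in the context satisfies C(r; (ν₁,…,ν_r); 0; ∅) = r^{r·c} · C^{MB}. -/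

import Mathlib

open Complex Filter

noncomputable section

/-- Real logarithm of the Barnes `G`-function at `1 + x`, for `x > -1`. -/
def logBarnesG1p (x : ℝ) : ℝ :=
  x / 2 * Real.log (2 * Real.pi) - (x + x ^ 2 * (1 + Real.eulerMascheroniConstant)) / 2 +
    ∑' k : ℕ, (((k : ℝ) + 1) * Real.log (1 + x / ((k : ℝ) + 1)) - x + x ^ 2 / (2 * ((k : ℝ) + 1)))

/-- Barnes `G`-function for real `x > 0`. -/
def BarnesG (x : ℝ) : ℝ := Real.exp (logBarnesG1p (x - 1))

/-- The explicit multiplicative constant. -/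
def meijerC (r q : ℕ) (ν : Fin r → ℝ) (μ : Fin q → ℝ) : ℂ :=
  ((((∏ j, BarnesG (1 + ν j)) * ∏ k, (2 * Real.pi) ^ (μ k / 2)) /
      ((∏ k, BarnesG (1 + μ k)) * ∏ j, (2 * Real.pi) ^ (ν j / 2)) : ℝ) : ℂ) *
  Complex.exp ((1 - (r : ℂ) + (q : ℂ)) * deriv riemannZeta (-1)) *
  Complex.exp ((((1 + (r : ℝ) - q - ((r : ℝ) - q) ^ 2) / (2 * (1 + (r : ℝ) - q)) *
        ((∑ j, ν j ^ 2) - ∑ k, μ k ^ 2) +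
      (-2 + ((r : ℝ) - q) ^ 2 * ((r : ℝ) - q - 1)) / (24 * (1 + (r : ℝ) - q)) +
      (∑ j, ∑ k, if j < k then ν j * ν k else 0) +
      (∑ j, ∑ k, if j < k then μ j * μ k else 0) -
      (∑ j, ν j) * (∑ k, μ k) + ∑ k, μ k ^ 2) * Real.log ((r : ℝ) - q) : ℝ)) *
  Complex.exp (((-((2 - (r : ℝ) + q) / 2) * ((∑ j, ν j ^ 2) - ∑ k, μ k ^ 2) -
      ((r : ℝ) - q - 1) ^ 2 / 24 -
      (∑ j, ∑ k, if j < k then ν j * ν k else 0) -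
      (∑ j, ∑ k, if j < k then μ j * μ k else 0) +
      (∑ j, ν j) * (∑ k, μ k) - ∑ k, μ k ^ 2) * Real.log (1 + (r : ℝ) - q) : ℝ))

/-- The Muttalib--Borodin parameters `ν_j = α + (j-1)/r`, `j = 1,…,r`. -/
def nuMB (r : ℕ) (α : ℝ) : Fin r → ℝ := fun j => α + (j : ℝ) / r

/-- The coefficient `c` of `ln s`. -/
def cMB (r : ℕ) (α : ℝ) : ℝ :=
  ((r : ℝ) - 1) / (12 * ((r : ℝ) + 1)) - 1 / (2 * ((r : ℝ) + 1)) * ∑ j, nuMB r α j ^ 2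

/-- The regularized sum `d(1/r, α)`. -/
def dThetaMB (r : ℕ) (α : ℝ) : ℂ :=
  (r : ℂ) * deriv riemannZeta (-1) +
    (((1 + (1 + 2 * α) * r) / 4 * Real.log (2 * Real.pi) : ℝ) : ℂ) -
    ((1 / 12 * (3 + 1 / (r : ℝ) + r + 6 * α * (1 + r + α * r)) * Real.log r : ℝ) : ℂ) -
    ∑ k : Fin r, ((logBarnesG1p (α + ((k : ℝ) + 1) / r) : ℝ) : ℂ)

/-- The regularized sum `d(1, α)`. -/
def dOneMB (α : ℝ) : ℂ :=
  deriv riemannZeta (-1) + (((1 + α) / 2 * Real.log (2 * Real.pi) : ℝ) : ℂ) -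
    ((logBarnesG1p (1 + α) : ℝ) : ℂ)

/-- The Muttalib--Borodin constant `C^{MB}(1/r, α)`. -/
def CmbMB (r : ℕ) (α : ℝ) : ℂ :=
  ((BarnesG (1 + α) * (2 * Real.pi) ^ (-(α / 2)) : ℝ) : ℂ) *
    Complex.exp (dOneMB α - dThetaMB r α) *
    Complex.exp
      (((24 * α * (α + 2) + 15 + 3 * (1 / (r : ℝ)) + 4 * (1 / (r : ℝ)) ^ 2) /
          (24 * (1 + 1 / (r : ℝ))) * Real.log (1 / (r : ℝ)) : ℝ)) *
    Complex.exp
      (((6 * α * (1 / (r : ℝ)) - 6 * α * (1 + α) - (1 / (r : ℝ) - 1) ^ 2) /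
          (12 * (1 / (r : ℝ))) * Real.log (1 + 1 / (r : ℝ)) : ℝ))

/-- First power sum of the parameters. -/
lemma nuMB_sum (r : ℕ) (hr : 1 ≤ r) (α : ℝ) :
    ∑ j, nuMB r α j = r * α + ((r : ℝ) - 1) / 2 := by
  have hr0 : (r : ℝ) ≠ 0 := by positivity
  have key : ∀ n : ℕ, ∑ j ∈ Finset.range n, (α + (j : ℝ) / r)
      = n * α + n * ((n : ℝ) - 1) / (2 * r) := by
    intro n
    induction n with
    | zero => simp
    | succ n ih => rw [Finset.sum_range_succ, ih]; push_cast; field_simp; ring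
  have h := Fin.sum_univ_eq_sum_range (fun j : ℕ => α + (j : ℝ) / r) r
  unfold nuMB
  rw [h, key]
  field_simp

/-- Second power sum of the parameters. -/
lemma nuMB_sum_sq (r : ℕ) (hr : 1 ≤ r) (α : ℝ) :
    ∑ j, nuMB r α j ^ 2 =
      r * α ^ 2 + α * ((r : ℝ) - 1) + ((r : ℝ) - 1) * (2 * r - 1) / (6 * r) := by
  have hr0 : (r : ℝ) ≠ 0 := by positivity
  have key : ∀ n : ℕ, ∑ j ∈ Finset.range n, (α + (j : ℝ) / r) ^ 2
      = n * α ^ 2 + α * n * ((n : ℝ) - 1) / r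
        + n * ((n : ℝ) - 1) * (2 * n - 1) / (6 * r ^ 2) := by
    intro n
    induction n with
    | zero => simp
    | succ n ih => rw [Finset.sum_range_succ, ih]; push_cast; field_simp; ring
  have h := Fin.sum_univ_eq_sum_range (fun j : ℕ => (α + (j : ℝ) / r) ^ 2) r
  unfold nuMB
  rw [h, key]
  field_simp

/-- The second elementary symmetric polynomial through power sums. -/
lemma pair_sum (r : ℕ) (ν : Fin r → ℝ) :
    (∑ j, ∑ k, if j < k then ν j * ν k else 0) =
      ((∑ j, ν j) ^ 2 - ∑ j, ν j ^ 2) / 2 := by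
  have h1 : (∑ j, ν j) ^ 2 = ∑ j, ∑ k, ν j * ν k := by
    rw [sq, Finset.sum_mul_sum]
  have h2 : (∑ j, ν j ^ 2) = ∑ j, ∑ k, if j = k then ν j * ν k else 0 := by
    simp [sq]
  have h3 : (∑ j, ∑ k, if j < k then ν j * ν k else 0) =
      ∑ j, ∑ k, if k < j then ν j * ν k else 0 := by
    rw [Finset.sum_comm]
    simp only [mul_comm]
  have h4 : (∑ j, ∑ k, ν j * ν k) = (∑ j, ∑ k, if j < k then ν j * ν k else 0)
      + (∑ j, ∑ k, if k < j then ν j * ν k else 0)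
      + ∑ j, ∑ k, if j = k then ν j * ν k else 0 := by
    simp only [← Finset.sum_add_distrib]
    refine Finset.sum_congr rfl fun j _ => Finset.sum_congr rfl fun k _ => ?_
    rcases lt_trichotomy j k with h | h | h
    · simp [h, h.not_gt, h.ne]
    · simp [h]
    · simp [h, h.not_gt, h.ne']
  rw [h1, h4, ← h2, ← h3]
  ring

/-- Shifting the index in the sum of the `logG`. -/
lemma logG_shift (r : ℕ) (hr : 1 ≤ r) (α : ℝ) :
    ∑ k : Fin r, logBarnesG1p (α + ((k : ℝ) + 1) / r) =
      (∑ k : Fin r, logBarnesG1p (nuMB r α k)) + logBarnesG1p (1 + α) - logBarnesG1p α := by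
  have hr0 : (r : ℝ) ≠ 0 := by positivity
  have h1 := Fin.sum_univ_eq_sum_range
    (fun j : ℕ => logBarnesG1p (α + ((j : ℝ) + 1) / r)) r
  have h2 := Fin.sum_univ_eq_sum_range (fun j : ℕ => logBarnesG1p (α + (j : ℝ) / r)) r
  unfold nuMB
  rw [h1, h2]
  have h3 := Finset.sum_range_succ (fun j : ℕ => logBarnesG1p (α + (j : ℝ) / r)) r
  rw [Finset.sum_range_succ'] at h3
  simp only [Nat.cast_add, Nat.cast_one, Nat.cast_zero, zero_div, add_zero, div_self hr0] at h3
  rw [add_comm 1 α]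
  linarith

/-- consistency with the Muttalib--Borodin constant. -/
theorem meijerC_muttalib_borodin (r : ℕ) (hr : 1 ≤ r) (α : ℝ) (hα : -1 < α) :
    meijerC r 0 (nuMB r α) Fin.elim0 =
      (((r : ℝ) ^ ((r : ℝ) * cMB r α) : ℝ) : ℂ) * CmbMB r α := by
  have hrp : (0 : ℝ) < r := by exact_mod_cast hr
  have hr0 : (r : ℝ) ≠ 0 := hrp.ne'
  have hr1 : (r : ℝ) + 1 ≠ 0 := by positivity
  have hr2 : 1 + (r : ℝ) ≠ 0 := by positivity
  have hpi : (0 : ℝ) < 2 * Real.pi := by positivity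
  have hshift := logG_shift r hr α
  have hprod : (∏ j, BarnesG (1 + nuMB r α j)) =
      Real.exp (∑ j, logBarnesG1p (nuMB r α j)) := by
    rw [Real.exp_sum]
    refine Finset.prod_congr rfl fun j _ => ?_
    simp [BarnesG]
  have hprod2 : (∏ j, (2 * Real.pi) ^ (nuMB r α j / 2)) =
      Real.exp (Real.log (2 * Real.pi) * ((r * α + ((r : ℝ) - 1) / 2) / 2)) := by
    rw [← nuMB_sum r hr α, Finset.sum_div, Finset.mul_sum, Real.exp_sum]
    refine Finset.prod_congr rfl fun j _ => ?_
    rw [Real.rpow_def_of_pos hpi]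
  have hl1 : Real.log (1 / (r : ℝ)) = - Real.log r := by
    rw [one_div, Real.log_inv]
  have hl2 : Real.log (1 + 1 / (r : ℝ)) = Real.log (1 + r) - Real.log r := by
    rw [← Real.log_div hr2 hr0]
    congr 1
    field_simp
    ring
  unfold meijerC CmbMB dOneMB dThetaMB cMB
  rw [hprod, hprod2, hl1, hl2, pair_sum, nuMB_sum r hr, nuMB_sum_sq r hr,
    ← Complex.ofReal_sum, hshift, Real.rpow_def_of_pos hrp, Real.rpow_def_of_pos hpi]
  simp only [BarnesG, Finset.univ_eq_empty, Finset.prod_empty, Finset.sum_empty, mul_one, one_mul,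
    Nat.cast_zero, sub_zero, add_zero, mul_zero, add_sub_cancel_left]
  rw [← Real.exp_sub, ← Real.exp_add, Complex.ofReal_exp, Complex.ofReal_exp, Complex.ofReal_exp]
  simp only [← Complex.exp_add]
  congr 1
  generalize deriv riemannZeta (-1) = z
  generalize (∑ j, logBarnesG1p (nuMB r α j)) = S
  generalize logBarnesG1p α = a
  generalize logBarnesG1p (1 + α) = b
  generalize Real.log (2 * Real.pi) = P
  generalize Real.log (1 + (r : ℝ)) = M
  generalize Real.log (r : ℝ) = L
  have hc0 : (r : ℂ) ≠ 0 := by exact_mod_cast hr0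
  have hc1 : (r : ℂ) + 1 ≠ 0 := by exact_mod_cast hr1
  have hc2 : 1 + (r : ℂ) ≠ 0 := by exact_mod_cast hr2
  push_cast
  have hc3 : 1 + 1 / (r : ℂ) = (1 + r) / r := by field_simp; ring
  rw [hc3, add_comm (r : ℂ) 1]
  field_simp
  ring
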